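/- arXiv:2405.04431 — 2 statements merged into one kernel-verified Lean document; each statement's English description precedes it below -/
import Mathlib

section
/- Let 0 ≤ α ≤ 1 and 0 ≤ p_t ≤ β ≤ 1, and let V : ℕ × ℕ → ℝ have property (★). Define the value-iteration update TV : ℕ × ℕ → ℝ on ages Δ ≥ 1 by TV(b,Δ) = Δ + min{V⁰(b,Δ), V¹(b,Δ)} for b ≥ 1, and TV(0,Δ) = Δ + V⁰(0,Δ) (the update action is infeasible when no token is available). Then TV also has property (★): for all b ≥ 1 and all Δ⁺ ≥ Δ⁻ ≥ 2, (1−β)·(TV(b−1,Δ⁺) − TV(b−1,Δ⁻)) − (1−p_t)·(TV(b,Δ⁺) − TV(b,Δ⁻)) ≤ 0. -/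
/-- One-step expected value of the idle action (`a = 0`) in the token-based AoII MDP:
`V⁰(b,Δ) = α·p_t·V(b+1,0) + α·(1−p_t)·V(b+1,Δ+1) + (1−α)·p_t·V(b,0) + (1−α)·(1−p_t)·V(b,Δ+1)`. -/
def Vidle (α p_t : ℝ) (V : ℕ × ℕ → ℝ) (b Δ : ℕ) : ℝ :=
  α * p_t * V (b + 1, 0) + α * (1 - p_t) * V (b + 1, Δ + 1)
    + (1 - α) * p_t * V (b, 0) + (1 - α) * (1 - p_t) * V (b, Δ + 1)

/-- One-step expected value of the update action (`a = 1`) in the token-based AoII MDP: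
`V¹(b,Δ) = α·β·V(b,0) + α·(1−β)·V(b,Δ+1) + (1−α)·β·V(b−1,0) + (1−α)·(1−β)·V(b−1,Δ+1)`. -/
def Vupd (α β : ℝ) (V : ℕ × ℕ → ℝ) (b Δ : ℕ) : ℝ :=
  α * β * V (b, 0) + α * (1 - β) * V (b, Δ + 1)
    + (1 - α) * β * V (b - 1, 0) + (1 - α) * (1 - β) * V (b - 1, Δ + 1)

/-- `DV(b,Δ) = V¹(b,Δ) − V⁰(b,Δ)`. -/
def DV (α β p_t : ℝ) (V : ℕ × ℕ → ℝ) (b Δ : ℕ) : ℝ :=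
  Vupd α β V b Δ - Vidle α p_t V b Δ

/-- Property (★): for all `b ≥ 1` and all `Δ⁺ ≥ Δ⁻ ≥ 2`,
`(1−β)·(V(b−1,Δ⁺) − V(b−1,Δ⁻)) − (1−p_t)·(V(b,Δ⁺) − V(b,Δ⁻)) ≤ 0`. -/
def StarProp (β p_t : ℝ) (V : ℕ × ℕ → ℝ) : Prop :=
  ∀ b Δm Δp : ℕ, 1 ≤ b → 2 ≤ Δm → Δm ≤ Δp →
    (1 - β) * (V (b - 1, Δp) - V (b - 1, Δm)) - (1 - p_t) * (V (b, Δp) - V (b, Δm)) ≤ 0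

/-- The value-iteration update of the token-based AoII MDP:
`TV(b,Δ) = Δ + min{V⁰(b,Δ), V¹(b,Δ)}` for `b ≥ 1`, and `TV(0,Δ) = Δ + V⁰(0,Δ)`
(the update action is infeasible when no token is available). -/
noncomputable def TV (α β p_t : ℝ) (V : ℕ × ℕ → ℝ) : ℕ × ℕ → ℝ := fun s =>
  if s.1 = 0 then (s.2 : ℝ) + Vidle α p_t V 0 s.2
  else (s.2 : ℝ) + min (Vidle α p_t V s.1 s.2) (Vupd α β V s.1 s.2)

/-!
Averaging `V` over the random token arrival gives a function `W` which still has property (★). Write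
`δ` for an increment in the age, taken at the ages `Δ + 1` in the case of `W`. Then the action values
satisfy `δV⁰(b) = (1 - p_t) δW(b)` and `δV¹(b + 1) = (1 - β) δW(b)`. Property (★) for `W` says that
`δV¹ ≤ δV⁰` at every positive token count, and the increment of a minimum lies between those of its
two entries. Hence, with `M` the minimum over the feasible actions,
`(1 - β) δM(b) ≤ (1 - β) (1 - p_t) δW(b) ≤ (1 - p_t) δM(b + 1)`.
Adding an increasing cost keeps this inequality because `1 - β ≤ 1 - p_t`.
-/

section MinIncrement

variable {G : Type*} [AddCommGroup G] [LinearOrder G] [IsOrderedAddMonoid G] {a b c d : G}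

theorem min_sub_min_le_sub_left (h : b - d ≤ a - c) : min a b - min c d ≤ a - c := by
  rw [sub_le_iff_le_add, ← min_add_add_left, sub_add_cancel]
  exact min_le_min_left a (sub_le_iff_le_add.1 h)

theorem sub_right_le_min_sub_min (h : b - d ≤ a - c) : b - d ≤ min a b - min c d := by
  rw [le_sub_iff_add_le, ← min_add_add_left, sub_add_cancel]
  exact min_le_min_right b (le_sub_iff_add_le.1 h)

end MinIncrement

/-- The expectation `W(b,Δ)` of `V` after a token has arrived with probability `α`, all else
unchanged. -/
def arrivalMean (α : ℝ) (V : ℕ × ℕ → ℝ) : ℕ × ℕ → ℝ := fun s =>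
  α * V (s.1 + 1, s.2) + (1 - α) * V s

/-- The least one-step expected value over the feasible actions, i.e. the update `TV` without the
instantaneous cost. -/
noncomputable def minActionValue (α β p_t : ℝ) (V : ℕ × ℕ → ℝ) : ℕ × ℕ → ℝ
  | (0, Δ) => Vidle α p_t V 0 Δ
  | (b + 1, Δ) => min (Vidle α p_t V (b + 1) Δ) (Vupd α β V (b + 1) Δ)

section

variable {α β p_t : ℝ} {V : ℕ × ℕ → ℝ}

theorem TV_eq_add_minActionValue :
    TV α β p_t V = fun s => (s.2 : ℝ) + minActionValue α β p_t V s := by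
  ext ⟨_ | b, Δ⟩ <;> rfl

theorem starProp_iff_forall_succ :
    StarProp β p_t V ↔ ∀ ⦃b m n : ℕ⦄, 2 ≤ m → m ≤ n →
      (1 - β) * (V (b, n) - V (b, m)) ≤ (1 - p_t) * (V (b + 1, n) - V (b + 1, m)) := by
  constructor
  · intro h b m n hm hmn
    exact sub_nonpos.1 (h (b + 1) m n (Nat.le_add_left 1 b) hm hmn)
  · rintro h (_ | b) m n hb hm hmn
    · exact absurd hb (Nat.not_succ_le_zero 0)
    · exact sub_nonpos.2 (h hm hmn)

theorem Vidle_sub_Vidle (b m n : ℕ) :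
    Vidle α p_t V b n - Vidle α p_t V b m =
      (1 - p_t) * (arrivalMean α V (b, n + 1) - arrivalMean α V (b, m + 1)) := by
  simp only [Vidle, arrivalMean]
  ring

theorem Vupd_succ_sub_Vupd_succ (b m n : ℕ) :
    Vupd α β V (b + 1) n - Vupd α β V (b + 1) m =
      (1 - β) * (arrivalMean α V (b, n + 1) - arrivalMean α V (b, m + 1)) := by
  simp only [Vupd, arrivalMean, Nat.add_sub_cancel]
  ring

protected theorem StarProp.arrivalMean (hV : StarProp β p_t V) (hα0 : 0 ≤ α) (hα1 : α ≤ 1) :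
    StarProp β p_t (arrivalMean α V) := by
  rw [starProp_iff_forall_succ] at hV ⊢
  intro b m n hm hmn
  have arrival := mul_le_mul_of_nonneg_left (hV (b := b + 1) hm hmn) hα0
  have no_arrival := mul_le_mul_of_nonneg_left (hV (b := b) hm hmn) (sub_nonneg.2 hα1)
  simp only [arrivalMean]
  linarith

theorem StarProp.Vupd_sub_le_Vidle_sub (hV : StarProp β p_t V) (hα0 : 0 ≤ α) (hα1 : α ≤ 1)
    (b : ℕ) {m n : ℕ} (hm : 1 ≤ m) (hmn : m ≤ n) :
    Vupd α β V (b + 1) n - Vupd α β V (b + 1) m ≤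
      Vidle α p_t V (b + 1) n - Vidle α p_t V (b + 1) m := by
  rw [Vupd_succ_sub_Vupd_succ, Vidle_sub_Vidle]
  exact starProp_iff_forall_succ.1 (hV.arrivalMean hα0 hα1) (Nat.succ_le_succ hm)
    (Nat.succ_le_succ hmn)

theorem StarProp.minActionValue_sub_le (hV : StarProp β p_t V) (hα0 : 0 ≤ α) (hα1 : α ≤ 1)
    (b : ℕ) {m n : ℕ} (hm : 1 ≤ m) (hmn : m ≤ n) :
    minActionValue α β p_t V (b, n) - minActionValue α β p_t V (b, m) ≤
      Vidle α p_t V b n - Vidle α p_t V b m := by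
  cases b with
  | zero => exact le_rfl
  | succ b => exact min_sub_min_le_sub_left (hV.Vupd_sub_le_Vidle_sub hα0 hα1 b hm hmn)

theorem StarProp.le_minActionValue_succ_sub (hV : StarProp β p_t V) (hα0 : 0 ≤ α) (hα1 : α ≤ 1)
    (b : ℕ) {m n : ℕ} (hm : 1 ≤ m) (hmn : m ≤ n) :
    Vupd α β V (b + 1) n - Vupd α β V (b + 1) m ≤
      minActionValue α β p_t V (b + 1, n) - minActionValue α β p_t V (b + 1, m) :=
  sub_right_le_min_sub_min (hV.Vupd_sub_le_Vidle_sub hα0 hα1 b hm hmn)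

protected theorem StarProp.minActionValue (hV : StarProp β p_t V) (hα0 : 0 ≤ α) (hα1 : α ≤ 1)
    (hp : p_t ≤ 1) (hβ : β ≤ 1) : StarProp β p_t (minActionValue α β p_t V) := by
  rw [starProp_iff_forall_succ]
  intro b m n hm hmn
  have hm1 : 1 ≤ m := one_le_two.trans hm
  calc
    (1 - β) * (minActionValue α β p_t V (b, n) - minActionValue α β p_t V (b, m))
      ≤ (1 - β) * (Vidle α p_t V b n - Vidle α p_t V b m) :=
        mul_le_mul_of_nonneg_left (hV.minActionValue_sub_le hα0 hα1 b hm1 hmn) (sub_nonneg.2 hβ)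
    _ = (1 - p_t) * (Vupd α β V (b + 1) n - Vupd α β V (b + 1) m) := by
        rw [Vidle_sub_Vidle, Vupd_succ_sub_Vupd_succ, mul_left_comm]
    _ ≤ (1 - p_t) * (minActionValue α β p_t V (b + 1, n) -
          minActionValue α β p_t V (b + 1, m)) :=
        mul_le_mul_of_nonneg_left (hV.le_minActionValue_succ_sub hα0 hα1 b hm1 hmn)
          (sub_nonneg.2 hp)

theorem StarProp.monotone_add {c : ℕ → ℝ} (hV : StarProp β p_t V) (hc : Monotone c)
    (hpβ : p_t ≤ β) : StarProp β p_t (fun s => c s.2 + V s) := by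
  rw [starProp_iff_forall_succ] at hV ⊢
  intro b m n hm hmn
  have cost : (1 - β) * (c n - c m) ≤ (1 - p_t) * (c n - c m) :=
    mul_le_mul_of_nonneg_right (sub_le_sub_left hpβ 1) (sub_nonneg.2 (hc hmn))
  simpa only [add_sub_add_comm, mul_add] using add_le_add cost (hV hm hmn)

theorem TV_star_general {c : ℕ → ℝ} (hα0 : 0 ≤ α) (hα1 : α ≤ 1) (hptβ : p_t ≤ β) (hβ1 : β ≤ 1)
    (hc : Monotone c) (hV : StarProp β p_t V) :
    StarProp β p_t (fun s => c s.2 + minActionValue α β p_t V s) :=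
  (hV.minActionValue hα0 hα1 (hptβ.trans hβ1) hβ1).monotone_add hc hptβ

end

/-- If `0 ≤ α ≤ 1`, `0 ≤ p_t ≤ β ≤ 1` and `V` has property (★), then the value-iteration
update `TV` also has property (★). -/
theorem TV_star (α β p_t : ℝ) (V : ℕ × ℕ → ℝ)
    (hα0 : 0 ≤ α) (hα1 : α ≤ 1) (hpt0 : 0 ≤ p_t) (hptβ : p_t ≤ β) (hβ1 : β ≤ 1)
    (hstar : StarProp β p_t V) :
    StarProp β p_t (TV α β p_t V) := by
  rw [TV_eq_add_minActionValue]
  exact TV_star_general hα0 hα1 hptβ hβ1 Nat.mono_cast hstar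
end

section
/- Let 0 ≤ α ≤ 1, 0 ≤ p_t ≤ β ≤ 1 and 0 ≤ p_R ≤ 1. Define the value-iteration sequence V_0, V_1, V_2, … : ℕ × ℕ → ℝ by V_0 ≡ 0 and, for each k: V_{k+1}(b,Δ) = Δ + min{V⁰_{k+1}(b,Δ), V¹_{k+1}(b,Δ)} for b ≥ 1 and Δ ≥ 1; V_{k+1}(0,Δ) = Δ + V⁰_{k+1}(0,Δ) for Δ ≥ 1; and for Δ = 0, V_{k+1}(b,0) = min{ α·(p_R·V_k(b+1,0) + (1−p_R)·V_k(b+1,1)) + (1−α)·(p_R·V_k(b,0) + (1−p_R)·V_k(b,1)), α·(p_R·V_k(b,0) + (1−p_R)·V_k(b,1)) + (1−α)·(p_R·V_k(b−1,0) + (1−p_R)·V_k(b−1,1)) } for b ≥ 1, and V_{k+1}(0,0) = α·(p_R·V_k(1,0) + (1−p_R)·V_k(1,1)) + (1−α)·(p_R·V_k(0,0) + (1−p_R)·V_k(0,1)), where V⁰_{k+1} and V¹_{k+1} are the action value functions built from V_k. Then for every k ≥ 0: (i) each V_k has property (★); (ii) DV_{k+1}(b,Δ) := V¹_{k+1}(b,Δ)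 − V⁰_{k+1}(b,Δ) is nonincreasing in Δ on {1, 2, 3, …} for every b ≥ 1; and (iii) for every b ≥ 1 the set {Δ ≥ 1 : DV_{k+1}(b,Δ) < 0} is upward closed, i.e., the value-iteration greedy policy that transmits exactly when DV_{k+1}(b,Δ) < 0 is a threshold policy in the age Δ. -/
/-- One-step expected value of the idle action at a synchronized state (`Δ = 0`):
`α·(p_R·V(b+1,0) + (1−p_R)·V(b+1,1)) + (1−α)·(p_R·V(b,0) + (1−p_R)·V(b,1))`. -/
def Widle (α p_R : ℝ) (V : ℕ × ℕ → ℝ) (b : ℕ) : ℝ :=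
  α * (p_R * V (b + 1, 0) + (1 - p_R) * V (b + 1, 1))
    + (1 - α) * (p_R * V (b, 0) + (1 - p_R) * V (b, 1))

/-- One-step expected value of the update action at a synchronized state (`Δ = 0`):
`α·(p_R·V(b,0) + (1−p_R)·V(b,1)) + (1−α)·(p_R·V(b−1,0) + (1−p_R)·V(b−1,1))`. -/
def Wupd (α p_R : ℝ) (V : ℕ × ℕ → ℝ) (b : ℕ) : ℝ :=
  α * (p_R * V (b, 0) + (1 - p_R) * V (b, 1))
    + (1 - α) * (p_R * V (b - 1, 0) + (1 - p_R) * V (b - 1, 1))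

/-- The value-iteration sequence of the token-based AoII MDP: `V_0 ≡ 0` and
`V_{k+1}(b,Δ) = Δ + min{V⁰_{k+1}(b,Δ), V¹_{k+1}(b,Δ)}` for `b ≥ 1`, `Δ ≥ 1`;
`V_{k+1}(0,Δ) = Δ + V⁰_{k+1}(0,Δ)` for `Δ ≥ 1`; and at `Δ = 0` the corresponding
expressions with staying probability `p_R`. -/
noncomputable def Vit (α β p_t p_R : ℝ) : ℕ → ℕ × ℕ → ℝ
  | 0 => fun _ => 0
  | (k + 1) => fun s =>
      if s.2 = 0 then
        (if s.1 = 0 then Widle α p_R (Vit α β p_t p_R k) 0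
         else min (Widle α p_R (Vit α β p_t p_R k) s.1)
                  (Wupd α p_R (Vit α β p_t p_R k) s.1))
      else
        (if s.1 = 0 then (s.2 : ℝ) + Vidle α p_t (Vit α β p_t p_R k) 0 s.2
         else (s.2 : ℝ) + min (Vidle α p_t (Vit α β p_t p_R k) s.1 s.2)
                              (Vupd α β (Vit α β p_t p_R k) s.1 s.2))

/-!
The increment in the age of `DV` is the convex combination, with weights `α` and `1 - α`, of the
expressions of (★) at `b + 1` and `b` tokens, so (★) makes `DV` nonincreasing. Then minimising over
the two actions yields an increment in the age lying between that of `Vupd` and that of `Vidle`.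
Both `Vidle` at `b` tokens and `Vupd` at `b + 1` tokens average the same two increments of `V`, with
factors `1 - p_t` and `1 - β`; bounding the value at `b` by idling and the value at `b + 1` by
updating therefore gives two equal sides in (★), hence (★) for the minimum. Since (★) is additive,
it propagates along value iteration for every cost that satisfies it.
-/

section Minimum

variable {R : Type*} [AddCommGroup R] [LinearOrder R] [IsOrderedAddMonoid R] {a b a' b' : R}

theorem min_sub_min_le_left_of_sub_le_sub (h : b' - b ≤ a' - a) :
    min a' b' - min a b ≤ a' - a := by
  rcases min_choice a b with hmin | hmin <;> rw [hmin]
  · exact sub_le_sub_right (min_le_left a' b') a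
  · exact (sub_le_sub_right (min_le_right a' b') b).trans h

theorem right_sub_le_min_sub_min_of_sub_le_sub (h : b' - b ≤ a' - a) :
    b' - b ≤ min a' b' - min a b := by
  rcases min_choice a' b' with hmin | hmin <;> rw [hmin]
  · exact h.trans (sub_le_sub_left (min_le_left a b) a')
  · exact sub_le_sub_left (min_le_right a b) b'

end Minimum

/-- The optimal expected continuation value at an age `Δ ≥ 1`: the better of idling and updating,
where updating requires a token. The instantaneous cost is not included. -/
noncomputable def continuationValue (α β p_t : ℝ) (V : ℕ × ℕ → ℝ) : ℕ → ℕ → ℝ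
  | 0, Δ => Vidle α p_t V 0 Δ
  | b + 1, Δ => min (Vidle α p_t V (b + 1) Δ) (Vupd α β V (b + 1) Δ)

theorem Vit_succ_of_age_ne_zero (α β p_t p_R : ℝ) (k b : ℕ) {Δ : ℕ} (hΔ : Δ ≠ 0) :
    Vit α β p_t p_R (k + 1) (b, Δ) =
      (Δ : ℝ) + continuationValue α β p_t (Vit α β p_t p_R k) b Δ := by
  cases b <;> simp [Vit, continuationValue, hΔ]

theorem one_sub_mul_Vidle_sub_eq_one_sub_mul_Vupd_sub (α β p_t : ℝ) (V : ℕ × ℕ → ℝ)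
    (b Δm Δp : ℕ) :
    (1 - β) * (Vidle α p_t V b Δp - Vidle α p_t V b Δm) =
      (1 - p_t) * (Vupd α β V (b + 1) Δp - Vupd α β V (b + 1) Δm) := by
  simp only [Vidle, Vupd, Nat.add_sub_cancel]
  ring

section ValueIteration

variable {α β p_t : ℝ} {V W : ℕ × ℕ → ℝ}

theorem starProp_of_monotone_age (hptβ : p_t ≤ β) {c : ℕ → ℝ} (hc : Monotone c) :
    StarProp β p_t (fun s => c s.2) := by
  intro b Δm Δp _ _ hmp
  rw [← sub_mul]
  exact mul_nonpos_of_nonpos_of_nonneg (by linarith) (sub_nonneg.2 (hc hmp))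

namespace StarProp

theorem add (hV : StarProp β p_t V) (hW : StarProp β p_t W) : StarProp β p_t (V + W) := by
  intro b Δm Δp hb hm hmp
  simp only [Pi.add_apply]
  linarith [hV b Δm Δp hb hm hmp, hW b Δm Δp hb hm hmp]

theorem congr (hV : StarProp β p_t V) (h : ∀ b Δ, 2 ≤ Δ → W (b, Δ) = V (b, Δ)) :
    StarProp β p_t W := by
  intro b Δm Δp hb hm hmp
  simpa only [h _ Δm hm, h _ Δp (hm.trans hmp)] using hV b Δm Δp hb hm hmp

theorem antitoneOn_DV (hV : StarProp β p_t V) (hα0 : 0 ≤ α) (hα1 : α ≤ 1) {b : ℕ} (hb : 1 ≤ b) :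
    AntitoneOn (DV α β p_t V b) (Set.Ici 1) := by
  intro Δm hm Δp _ hmp
  have hm' : 2 ≤ Δm + 1 := Nat.succ_le_succ hm
  have hmp' : Δm + 1 ≤ Δp + 1 := Nat.succ_le_succ hmp
  have h_convex : DV α β p_t V b Δp - DV α β p_t V b Δm =
      α * ((1 - β) * (V (b, Δp + 1) - V (b, Δm + 1)) -
          (1 - p_t) * (V (b + 1, Δp + 1) - V (b + 1, Δm + 1))) +
        (1 - α) * ((1 - β) * (V (b - 1, Δp + 1) - V (b - 1, Δm + 1)) -
          (1 - p_t) * (V (b, Δp + 1) - V (b, Δm + 1))) := by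
    unfold DV Vupd Vidle
    ring
  rw [← sub_nonpos, h_convex]
  exact add_nonpos
    (mul_nonpos_of_nonneg_of_nonpos hα0 (hV (b + 1) _ _ b.succ_pos hm' hmp'))
    (mul_nonpos_of_nonneg_of_nonpos (sub_nonneg.2 hα1) (hV b _ _ hb hm' hmp'))

theorem Vupd_sub_le_Vidle_sub_s7 (hV : StarProp β p_t V) (hα0 : 0 ≤ α) (hα1 : α ≤ 1)
    {b Δm Δp : ℕ} (hb : 1 ≤ b) (hm : 1 ≤ Δm) (hmp : Δm ≤ Δp) :
    Vupd α β V b Δp - Vupd α β V b Δm ≤ Vidle α p_t V b Δp - Vidle α p_t V b Δm := by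
  have hDV : Vupd α β V b Δp - Vidle α p_t V b Δp ≤ Vupd α β V b Δm - Vidle α p_t V b Δm :=
    hV.antitoneOn_DV hα0 hα1 hb hm (hm.trans hmp) hmp
  linarith

theorem continuationValue_sub_le_Vidle_sub (hV : StarProp β p_t V) (hα0 : 0 ≤ α) (hα1 : α ≤ 1)
    (b : ℕ) {Δm Δp : ℕ} (hm : 1 ≤ Δm) (hmp : Δm ≤ Δp) :
    continuationValue α β p_t V b Δp - continuationValue α β p_t V b Δm ≤
      Vidle α p_t V b Δp - Vidle α p_t V b Δm := by
  cases b with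
  | zero => exact le_rfl
  | succ b =>
    exact min_sub_min_le_left_of_sub_le_sub
      (hV.Vupd_sub_le_Vidle_sub_s7 hα0 hα1 b.succ_pos hm hmp)

theorem Vupd_sub_le_continuationValue_sub (hV : StarProp β p_t V) (hα0 : 0 ≤ α) (hα1 : α ≤ 1)
    (b : ℕ) {Δm Δp : ℕ} (hm : 1 ≤ Δm) (hmp : Δm ≤ Δp) :
    Vupd α β V (b + 1) Δp - Vupd α β V (b + 1) Δm ≤
      continuationValue α β p_t V (b + 1) Δp - continuationValue α β p_t V (b + 1) Δm :=
  right_sub_le_min_sub_min_of_sub_le_sub (hV.Vupd_sub_le_Vidle_sub_s7 hα0 hα1 b.succ_pos hm hmp)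

end StarProp

theorem starProp_continuationValue (hV : StarProp β p_t V) (hα0 : 0 ≤ α) (hα1 : α ≤ 1)
    (hpt1 : p_t ≤ 1) (hβ1 : β ≤ 1) :
    StarProp β p_t (fun s => continuationValue α β p_t V s.1 s.2) := by
  intro b Δm Δp hb hm hmp
  obtain ⟨b, rfl⟩ := Nat.exists_eq_add_of_le' hb
  have hm1 : 1 ≤ Δm := one_le_two.trans hm
  rw [Nat.add_sub_cancel, sub_nonpos]
  calc (1 - β) * (continuationValue α β p_t V b Δp - continuationValue α β p_t V b Δm)
      ≤ (1 - β) * (Vidle α p_t V b Δp - Vidle α p_t V b Δm) :=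
        mul_le_mul_of_nonneg_left (hV.continuationValue_sub_le_Vidle_sub hα0 hα1 b hm1 hmp)
          (sub_nonneg.2 hβ1)
    _ = (1 - p_t) * (Vupd α β V (b + 1) Δp - Vupd α β V (b + 1) Δm) :=
        one_sub_mul_Vidle_sub_eq_one_sub_mul_Vupd_sub α β p_t V b Δm Δp
    _ ≤ (1 - p_t) * (continuationValue α β p_t V (b + 1) Δp -
          continuationValue α β p_t V (b + 1) Δm) :=
        mul_le_mul_of_nonneg_left (hV.Vupd_sub_le_continuationValue_sub hα0 hα1 b hm1 hmp)
          (sub_nonneg.2 hpt1)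

theorem Vit_threshold_general (hα0 : 0 ≤ α) (hα1 : α ≤ 1) (hpt1 : p_t ≤ 1) (hβ1 : β ≤ 1)
    {c : ℕ × ℕ → ℝ} (hc : StarProp β p_t c) {U : ℕ → ℕ × ℕ → ℝ} (hU0 : StarProp β p_t (U 0))
    (hU : ∀ k b Δ, 2 ≤ Δ → U (k + 1) (b, Δ) = c (b, Δ) + continuationValue α β p_t (U k) b Δ) :
    (∀ k : ℕ, StarProp β p_t (U k))
    ∧ (∀ k b Δm Δp : ℕ, 1 ≤ b → 1 ≤ Δm → Δm ≤ Δp →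
        DV α β p_t (U k) b Δp ≤ DV α β p_t (U k) b Δm)
    ∧ (∀ k b Δm Δp : ℕ, 1 ≤ b → 1 ≤ Δm → Δm ≤ Δp →
        DV α β p_t (U k) b Δm < 0 → DV α β p_t (U k) b Δp < 0) := by
  have hstar : ∀ k, StarProp β p_t (U k) := by
    intro k
    induction k with
    | zero => exact hU0
    | succ k ih => exact (hc.add (starProp_continuationValue ih hα0 hα1 hpt1 hβ1)).congr (hU k)
  have hDV : ∀ k b Δm Δp : ℕ, 1 ≤ b → 1 ≤ Δm → Δm ≤ Δp →
      DV α β p_t (U k) b Δp ≤ DV α β p_t (U k) b Δm :=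
    fun k _ _ _ hb hm hmp => (hstar k).antitoneOn_DV hα0 hα1 hb hm (hm.trans hmp) hmp
  exact ⟨hstar, hDV, fun k b Δm Δp hb hm hmp hneg => (hDV k b Δm Δp hb hm hmp).trans_lt hneg⟩

end ValueIteration

/-- Theorem 1 of the paper, via value iteration: if `0 ≤ α ≤ 1`, `0 ≤ p_t ≤ β ≤ 1` and
`0 ≤ p_R ≤ 1`, then (i) every iterate `V_k` has property (★); (ii) for every `b ≥ 1`,
`Δ ↦ DV_{k+1}(b,Δ) = V¹_{k+1}(b,Δ) − V⁰_{k+1}(b,Δ)` is nonincreasing on `{1,2,3,…}`;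
and (iii) for every `b ≥ 1` the set `{Δ ≥ 1 : DV_{k+1}(b,Δ) < 0}` is upward closed, i.e.
the value-iteration greedy policy is a threshold policy in the age `Δ`. -/
theorem Vit_threshold (α β p_t p_R : ℝ)
    (hα0 : 0 ≤ α) (hα1 : α ≤ 1) (hpt0 : 0 ≤ p_t) (hptβ : p_t ≤ β) (hβ1 : β ≤ 1)
    (hpR0 : 0 ≤ p_R) (hpR1 : p_R ≤ 1) :
    (∀ k : ℕ, StarProp β p_t (Vit α β p_t p_R k))
    ∧ (∀ k b Δm Δp : ℕ, 1 ≤ b → 1 ≤ Δm → Δm ≤ Δp →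
        DV α β p_t (Vit α β p_t p_R k) b Δp ≤ DV α β p_t (Vit α β p_t p_R k) b Δm)
    ∧ (∀ k b Δm Δp : ℕ, 1 ≤ b → 1 ≤ Δm → Δm ≤ Δp →
        DV α β p_t (Vit α β p_t p_R k) b Δm < 0 →
        DV α β p_t (Vit α β p_t p_R k) b Δp < 0) :=
  Vit_threshold_general hα0 hα1 (hptβ.trans hβ1) hβ1 (starProp_of_monotone_age hptβ Nat.mono_cast)
    (starProp_of_monotone_age hptβ (monotone_const (c := 0)))
    fun k b _ hΔ => Vit_succ_of_age_ne_zero α β p_t p_R k b (Nat.ne_zero_of_lt hΔ)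
end
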